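/- arXiv:math/0211376 — 6 statements merged into one kernel-verified Lean document; each statement's English description precedes it below -/
import Mathlib

section
/- Let E be a finite-dimensional real normed vector space, U ⊆ E an open set, and X : U → E a vector field. Suppose ω : ℝ → ℝ is continuous and positive on (0,∞), nondecreasing on (0,∞), and satisfies Osgood's condition that t ↦ 1/ω(t) is not integrable on the interval (0, 1/2) (i.e. ∫₀^{1/2} dt/ω(t) = ∞). Assume ‖X(a) − X(b)‖ ≤ ω(‖a − b‖) for all a, b ∈ U with a ≠ b. If I is an interval, t₀ ∈ I, and γ₁, γ₂ : I → U are differentiable with γᵢ'(t) = X(γᵢ(t)) for all t ∈ I and γ₁(t₀) = γ₂(t₀), then γ₁(t) = γ₂(t) for all t ∈ I. -/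
open Set Filter Topology MeasureTheory

section Osgood

variable {ω : ℝ → ℝ}

lemma continuousOn_one_div_of_pos (hω_cont : ContinuousOn ω (Ioi 0))
    (hω_pos : ∀ t, 0 < t → 0 < ω t) : ContinuousOn (fun t => 1 / ω t) (Ioi 0) :=
  continuousOn_const.div hω_cont fun t ht => (hω_pos t ht).ne'

lemma intervalIntegrable_one_div_of_pos (hω_cont : ContinuousOn ω (Ioi 0))
    (hω_pos : ∀ t, 0 < t → 0 < ω t) {u v : ℝ} (hu : 0 < u) (hv : 0 < v) :
    IntervalIntegrable (fun t => 1 / ω t) volume u v :=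
  ((continuousOn_one_div_of_pos hω_cont hω_pos).mono fun _ ht =>
    (lt_min hu hv).trans_le ht.1).intervalIntegrable

/-- A primitive of `1 / ω` lies below its tangent lines when `ω` is nondecreasing. -/
lemma integral_one_div_le_sub_div (hω_cont : ContinuousOn ω (Ioi 0))
    (hω_pos : ∀ t, 0 < t → 0 < ω t) (hω_mono : MonotoneOn ω (Ioi 0))
    {u v : ℝ} (hu : 0 < u) (hv : 0 < v) :
    ∫ t in u..v, 1 / ω t ≤ (v - u) / ω u := by
  rcases le_total u v with h | h
  · calc ∫ t in u..v, 1 / ω t ≤ ∫ _ in u..v, 1 / ω u :=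
          intervalIntegral.integral_mono_on h
            (intervalIntegrable_one_div_of_pos hω_cont hω_pos hu hv) (by simp) fun t ht =>
            one_div_le_one_div_of_le (hω_pos u hu) (hω_mono hu (hu.trans_le ht.1) ht.1)
      _ = (v - u) / ω u := by simp [div_eq_mul_inv]
  · have key : ∫ _ in v..u, 1 / ω u ≤ ∫ t in v..u, 1 / ω t :=
      intervalIntegral.integral_mono_on h (by simp)
        (intervalIntegrable_one_div_of_pos hω_cont hω_pos hv hu) fun t ht =>
        one_div_le_one_div_of_le (hω_pos t (hv.trans_le ht.1))
          (hω_mono (hv.trans_le ht.1) hu ht.2)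
    rw [intervalIntegral.integral_symm]
    simp only [intervalIntegral.integral_const, smul_eq_mul] at key
    have : (v - u) / ω u = -((u - v) * (1 / ω u)) := by ring
    linarith

variable {E : Type*} [NormedAddCommGroup E] [NormedSpace ℝ E] {f f' : ℝ → E} {a b : ℝ}

/-- Separation of variables for the differential inequality `‖f'‖ ≤ ω ‖f‖`. -/
lemma integral_one_div_norm_le_sub (hω_cont : ContinuousOn ω (Ioi 0))
    (hω_pos : ∀ t, 0 < t → 0 < ω t) (hω_mono : MonotoneOn ω (Ioi 0)) (hab : a ≤ b)
    (hf : ContinuousOn f (Icc a b))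
    (hf' : ∀ t ∈ Ico a b, HasDerivWithinAt f (f' t) (Ici t) t)
    (hne : ∀ t ∈ Icc a b, f t ≠ 0) (bound : ∀ t ∈ Ico a b, ‖f' t‖ ≤ ω ‖f t‖) :
    ∫ r in ‖f a‖..‖f b‖, 1 / ω r ≤ b - a := by
  have hpos : ∀ t ∈ Icc a b, 0 < ‖f t‖ := fun t ht => norm_pos_iff.2 (hne t ht)
  have ha := hpos a (left_mem_Icc.2 hab)
  have hcont := continuousOn_one_div_of_pos hω_cont hω_pos
  refine image_le_of_liminf_slope_right_le_deriv_boundary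
    (f := fun t => ∫ r in ‖f a‖..‖f t‖, 1 / ω r) (B := fun t => t - a) (B' := fun _ => 1)
    ?_ (by simp) (by fun_prop) (fun t _ => (hasDerivWithinAt_id t _).sub_const a) ?_
    (right_mem_Icc.2 hab)
  · intro t ht
    have hF : HasDerivAt (fun u => ∫ r in ‖f a‖..u, 1 / ω r) (1 / ω ‖f t‖) ‖f t‖ :=
      intervalIntegral.integral_hasDerivAt_right
        (intervalIntegrable_one_div_of_pos hω_cont hω_pos ha (hpos t ht))
        (hcont.stronglyMeasurableAtFilter isOpen_Ioi _ (hpos t ht))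
        (hcont.continuousAt (Ioi_mem_nhds (hpos t ht)))
    exact hF.continuousAt.comp_continuousWithinAt (f := fun t => ‖f t‖) (hf t ht).norm
  · intro t ht r hr
    have htp := hpos t (Ico_subset_Icc_self ht)
    have hω := hω_pos _ htp
    have hlt : ‖f' t‖ < r * ω ‖f t‖ := (bound t ht).trans_lt (lt_mul_of_one_lt_left hω hr)
    refine ((hf' t ht).liminf_right_slope_norm_le hlt).mp ?_
    filter_upwards [Ioo_mem_nhdsGT ht.2] with z hz hslope
    have hzp := hpos z ⟨ht.1.trans hz.1.le, hz.2.le⟩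
    have hzt : 0 < z - t := sub_pos.2 hz.1
    rw [slope_def_field, intervalIntegral.integral_interval_sub_left
      (intervalIntegrable_one_div_of_pos hω_cont hω_pos ha hzp)
      (intervalIntegrable_one_div_of_pos hω_cont hω_pos ha htp), div_lt_iff₀ hzt]
    refine (integral_one_div_le_sub_div hω_cont hω_pos hω_mono htp hzp).trans_lt ?_
    rw [inv_mul_lt_iff₀ hzt] at hslope
    rw [div_lt_iff₀ hω]
    linarith

/-- A function starting at `0` and satisfying `‖f'‖ ≤ ω ‖f‖` vanishes under Osgood's condition. -/
lemma eq_zero_of_norm_deriv_le_osgood (hω_cont : ContinuousOn ω (Ioi 0))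
    (hω_pos : ∀ t, 0 < t → 0 < ω t) (hω_mono : MonotoneOn ω (Ioi 0))
    (hω_osgood : ¬ IntegrableOn (fun t => 1 / ω t) (Ioo 0 (1 / 2))) (hab : a ≤ b)
    (hf : ContinuousOn f (Icc a b))
    (hf' : ∀ t ∈ Ico a b, HasDerivWithinAt f (f' t) (Ici t) t)
    (bound : ∀ t ∈ Ico a b, f t ≠ 0 → ‖f' t‖ ≤ ω ‖f t‖) (ha : f a = 0) : f b = 0 := by
  by_contra hb
  have hbp : 0 < ‖f b‖ := norm_pos_iff.2 hb
  have hcont := continuousOn_one_div_of_pos hω_cont hω_pos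
  obtain ⟨s, ⟨hs, hfs⟩, hmax⟩ : ∃ s, IsGreatest (Icc a b ∩ f ⁻¹' {0}) s :=
    (isCompact_Icc.of_isClosed_subset
      (hf.preimage_isClosed_of_isClosed isClosed_Icc isClosed_singleton)
      inter_subset_left).exists_isGreatest ⟨a, left_mem_Icc.2 hab, ha⟩
  have hsb : s < b := hs.2.lt_of_ne fun h => hb (h ▸ hfs)
  have hne : ∀ t ∈ Ioc s b, f t ≠ 0 := fun t ht h0 =>
    (hmax ⟨⟨hs.1.trans ht.1.le, ht.2⟩, h0⟩).not_gt ht.1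
  obtain ⟨u, -, hu, hlim⟩ := exists_seq_strictAnti_tendsto' hsb
  have hup : ∀ n, 0 < ‖f (u n)‖ := fun n => norm_pos_iff.2 (hne _ ⟨(hu n).1, (hu n).2.le⟩)
  have hnear : IntegrableOn (fun t => 1 / ω t) (Ioc 0 ‖f b‖) := by
    refine integrableOn_Ioc_of_intervalIntegral_norm_bounded_left (l := atTop) (I := b - s)
      (a := fun n => ‖f (u n)‖)
      (fun n => (intervalIntegrable_one_div_of_pos hω_cont hω_pos (hup n) hbp).1) ?_
      (Eventually.of_forall fun n => ?_)
    · have hfu : Tendsto (fun n => f (u n)) atTop (𝓝 (f s)) :=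
        (hf s hs).tendsto.comp (tendsto_nhdsWithin_iff.2 ⟨hlim, Eventually.of_forall fun n =>
          ⟨hs.1.trans (hu n).1.le, (hu n).2.le⟩⟩)
      rw [show f s = 0 from hfs] at hfu
      simpa using hfu.norm
    · rcases le_total ‖f (u n)‖ ‖f b‖ with h | h
      · have hint := integral_one_div_norm_le_sub hω_cont hω_pos hω_mono (hu n).2.le
          (hf.mono (Icc_subset_Icc_left (hs.1.trans (hu n).1.le)))
          (fun t ht => hf' t ⟨(hs.1.trans (hu n).1.le).trans ht.1, ht.2⟩)
          (fun t ht => hne t ⟨(hu n).1.trans_le ht.1, ht.2⟩)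
          (fun t ht => bound t ⟨(hs.1.trans (hu n).1.le).trans ht.1, ht.2⟩
            (hne t ⟨(hu n).1.trans_le ht.1, ht.2.le⟩))
        rw [intervalIntegral.integral_of_le h] at hint
        have heq : ∫ x in Ioc ‖f (u n)‖ ‖f b‖, ‖1 / ω x‖
            = ∫ x in Ioc ‖f (u n)‖ ‖f b‖, 1 / ω x :=
          setIntegral_congr_fun measurableSet_Ioc fun x hx =>
            Real.norm_of_nonneg (one_div_pos.2 (hω_pos x ((hup n).trans hx.1))).le
        rw [heq]
        linarith [(hu n).1]
      · rw [Ioc_eq_empty h.not_gt]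
        simpa using hs.2
  have hfar : IntegrableOn (fun t => 1 / ω t) (Ioc ‖f b‖ (1 / 2)) :=
    (intervalIntegrable_one_div_of_pos hω_cont hω_pos hbp (by norm_num)).1
  refine hω_osgood ((hnear.union hfar).mono_set fun t ht => ?_)
  rcases le_or_gt t ‖f b‖ with h | h
  · exact Or.inl ⟨ht.1, h⟩
  · exact Or.inr ⟨h, ht.2.le⟩

end Osgood

/-- Osgood's uniqueness theorem for ODEs: if the vector field `X` on an open set
`U` of a finite-dimensional real normed space has modulus of continuity `ω`,
where `ω` is continuous, positive and nondecreasing on `(0,∞)` and satisfies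
Osgood's condition `∫₀^{1/2} dt/ω(t) = ∞` (i.e. `1/ω` is not integrable on
`(0, 1/2)`), then two integral curves of `X` defined on an interval `I` that
agree at some `t₀ ∈ I` agree on all of `I`. -/
theorem osgood_uniqueness
    {E : Type*} [NormedAddCommGroup E] [NormedSpace ℝ E] [FiniteDimensional ℝ E]
    (U : Set E) (hU : IsOpen U) (X : E → E)
    (ω : ℝ → ℝ)
    (hω_cont : ContinuousOn ω (Set.Ioi (0 : ℝ)))
    (hω_pos : ∀ t : ℝ, 0 < t → 0 < ω t)
    (hω_mono : MonotoneOn ω (Set.Ioi (0 : ℝ)))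
    (hω_osgood : ¬ MeasureTheory.IntegrableOn (fun t => 1 / ω t)
      (Set.Ioo (0 : ℝ) (1 / 2)))
    (hX : ∀ a ∈ U, ∀ b ∈ U, a ≠ b → ‖X a - X b‖ ≤ ω ‖a - b‖)
    (I : Set ℝ) (hI : I.OrdConnected) (t₀ : ℝ) (ht₀ : t₀ ∈ I)
    (γ₁ γ₂ : ℝ → E)
    (hγ₁U : ∀ t ∈ I, γ₁ t ∈ U) (hγ₂U : ∀ t ∈ I, γ₂ t ∈ U)
    (hγ₁ : ∀ t ∈ I, HasDerivAt γ₁ (X (γ₁ t)) t)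
    (hγ₂ : ∀ t ∈ I, HasDerivAt γ₂ (X (γ₂ t)) t)
    (hinit : γ₁ t₀ = γ₂ t₀) :
    ∀ t ∈ I, γ₁ t = γ₂ t := by
  intro t ht
  have hd : ∀ r ∈ I, HasDerivAt (fun r => γ₁ r - γ₂ r) (X (γ₁ r) - X (γ₂ r)) r :=
    fun r hr => (hγ₁ r hr).sub (hγ₂ r hr)
  have hbound : ∀ r ∈ I, γ₁ r - γ₂ r ≠ 0 → ‖X (γ₁ r) - X (γ₂ r)‖ ≤ ω ‖γ₁ r - γ₂ r‖ :=
    fun r hr hne => hX _ (hγ₁U r hr) _ (hγ₂U r hr) (sub_ne_zero.1 hne)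
  rcases le_total t₀ t with h | h
  · have hmem : ∀ r ∈ Icc t₀ t, r ∈ I := fun r hr => hI.out ht₀ ht hr
    exact sub_eq_zero.1 (eq_zero_of_norm_deriv_le_osgood (f := fun r => γ₁ r - γ₂ r)
      hω_cont hω_pos hω_mono hω_osgood h
      (fun r hr => (hd r (hmem r hr)).continuousAt.continuousWithinAt)
      (fun r hr => (hd r (hmem r (Ico_subset_Icc_self hr))).hasDerivWithinAt)
      (fun r hr => hbound r (hmem r (Ico_subset_Icc_self hr))) (sub_eq_zero.2 hinit))
  · have hmem : ∀ r ∈ Icc (-t₀) (-t), -r ∈ I := fun r hr =>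
      hI.out ht ht₀ ⟨le_neg.1 hr.2, neg_le.1 hr.1⟩
    have hdn : ∀ r ∈ Icc (-t₀) (-t), HasDerivAt (fun r => γ₁ (-r) - γ₂ (-r))
        (-(X (γ₁ (-r)) - X (γ₂ (-r)))) r := fun r hr => by
      simpa [Function.comp_def] using (hd (-r) (hmem r hr)).scomp r (hasDerivAt_neg r)
    have hzero := eq_zero_of_norm_deriv_le_osgood hω_cont hω_pos hω_mono hω_osgood
      (neg_le_neg h) (fun r hr => (hdn r hr).continuousAt.continuousWithinAt)
      (fun r hr => (hdn r (Ico_subset_Icc_self hr)).hasDerivWithinAt)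
      (fun r hr hne => (norm_neg _).trans_le (hbound (-r) (hmem r (Ico_subset_Icc_self hr)) hne))
      (by simpa using sub_eq_zero.2 hinit)
    simpa using sub_eq_zero.1 hzero
end

section
/- Let E be a finite-dimensional real normed vector space, U ⊆ E an open set, C > 0, and X : U → E a vector field satisfying the log-Lipschitz condition ‖X(a) − X(b)‖ ≤ C‖a − b‖·log(1/‖a − b‖) for all a, b ∈ U with 0 < ‖a − b‖ ≤ 1/2. If I is an interval, t₀ ∈ I, and γ₁, γ₂ : I → U are differentiable with γᵢ'(t) = X(γᵢ(t)) for all t ∈ I and γ₁(t₀) = γ₂(t₀), then γ₁(t) = γ₂(t) for all t ∈ I. -/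
open Set in
/-- Osgood's lemma for the modulus `r * log (1 / r)`: a function that vanishes at `a` and whose
right derivative is bounded by this modulus of its norm, as long as the norm is at most `1 / 2`,
also vanishes at `b`. -/
theorem eq_zero_of_norm_deriv_right_le_mul_log {E : Type*} [NormedAddCommGroup E]
    [NormedSpace ℝ E] {f f' : ℝ → E} {C a b : ℝ} (hC : 0 < C) (hab : a ≤ b)
    (hf : ContinuousOn f (Icc a b)) (hf' : ∀ x ∈ Ico a b, HasDerivWithinAt f (f' x) (Ici x) x)
    (ha : f a = 0)
    (bound : ∀ x ∈ Ico a b, 0 < ‖f x‖ → ‖f x‖ ≤ 1 / 2 →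
      ‖f' x‖ ≤ C * ‖f x‖ * Real.log (1 / ‖f x‖)) :
    f b = 0 := by
  -- The barriers `exp (-s * exp (2 * C * (b - x)))` solve `B' = 2 * C * B * log (1 / B)`.
  have key : ∀ s : ℝ, 1 ≤ s → ‖f b‖ ≤ Real.exp (-s) := by
    intro s hs
    have hB' : ∀ x : ℝ, HasDerivAt (fun x => Real.exp (-(s * Real.exp (2 * C * (b - x)))))
        (2 * C * Real.exp (-(s * Real.exp (2 * C * (b - x)))) *
          (s * Real.exp (2 * C * (b - x)))) x := by
      intro x
      have h := (((((hasDerivAt_id x).const_sub b).const_mul (2 * C)).exp.const_mul s).neg).exp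
      refine h.congr_deriv ?_
      simp only [id, Pi.neg_apply]
      ring
    have h := image_norm_le_of_norm_deriv_right_lt_deriv_boundary' hf hf'
      (by simpa [ha] using (Real.exp_pos _).le)
      (fun x _ => (hB' x).continuousAt.continuousWithinAt)
      (fun x _ => (hB' x).hasDerivWithinAt) (fun x hx hfx => ?_) (right_mem_Icc.2 hab)
    · simpa using h
    · have hpos := Real.exp_pos (-(s * Real.exp (2 * C * (b - x))))
      have hexp : 1 ≤ Real.exp (2 * C * (b - x)) :=
        Real.one_le_exp (mul_nonneg (by positivity) (sub_nonneg.2 hx.2.le))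
      have hge : 1 ≤ s * Real.exp (2 * C * (b - x)) := one_le_mul_of_one_le_of_one_le hs hexp
      have hhalf : Real.exp (-(s * Real.exp (2 * C * (b - x)))) ≤ 1 / 2 :=
        (Real.exp_le_exp.2 (neg_le_neg hge)).trans Real.exp_neg_one_lt_half.le
      have hlt := bound x hx (hfx ▸ hpos) (hfx ▸ hhalf)
      rw [hfx, one_div, Real.log_inv, Real.log_exp, neg_neg] at hlt
      refine hlt.trans_lt (mul_lt_mul_of_pos_right ?_ (by linarith))
      exact mul_lt_mul_of_pos_right (by linarith) hpos
  have hlim : Filter.Tendsto (fun s : ℝ => Real.exp (-s)) Filter.atTop (nhds 0) :=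
    Real.tendsto_exp_neg_atTop_nhds_zero
  exact norm_le_zero_iff.1 (ge_of_tendsto hlim (Filter.eventually_atTop.2 ⟨1, key⟩))

/-- Uniqueness of integral curves of a log-Lipschitz vector field: if
`‖X(a) − X(b)‖ ≤ C‖a − b‖·log(1/‖a − b‖)` whenever `0 < ‖a − b‖ ≤ 1/2`,
then two integral curves of `X` on an interval `I` agreeing at `t₀ ∈ I`
agree on all of `I`. -/
theorem logLipschitz_uniqueness
    {E : Type*} [NormedAddCommGroup E] [NormedSpace ℝ E] [FiniteDimensional ℝ E]
    (U : Set E) (hU : IsOpen U) (C : ℝ) (hC : 0 < C) (X : E → E)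
    (hX : ∀ a ∈ U, ∀ b ∈ U, 0 < ‖a - b‖ → ‖a - b‖ ≤ 1 / 2 →
      ‖X a - X b‖ ≤ C * ‖a - b‖ * Real.log (1 / ‖a - b‖))
    (I : Set ℝ) (hI : I.OrdConnected) (t₀ : ℝ) (ht₀ : t₀ ∈ I)
    (γ₁ γ₂ : ℝ → E)
    (hγ₁U : ∀ t ∈ I, γ₁ t ∈ U) (hγ₂U : ∀ t ∈ I, γ₂ t ∈ U)
    (hγ₁ : ∀ t ∈ I, HasDerivAt γ₁ (X (γ₁ t)) t)
    (hγ₂ : ∀ t ∈ I, HasDerivAt γ₂ (X (γ₂ t)) t)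
    (hinit : γ₁ t₀ = γ₂ t₀) :
    ∀ t ∈ I, γ₁ t = γ₂ t := by
  intro t ht
  have hder : ∀ x ∈ I, HasDerivAt (fun x => γ₁ x - γ₂ x) (X (γ₁ x) - X (γ₂ x)) x :=
    fun x hx => (hγ₁ x hx).sub (hγ₂ x hx)
  rcases le_total t₀ t with h | h
  · have hsub : Set.Icc t₀ t ⊆ I := hI.out ht₀ ht
    refine sub_eq_zero.1 (eq_zero_of_norm_deriv_right_le_mul_log
      (f := fun x => γ₁ x - γ₂ x) (f' := fun x => X (γ₁ x) - X (γ₂ x)) hC h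
      (fun x hx => (hder x (hsub hx)).continuousAt.continuousWithinAt)
      (fun x hx => (hder x (hsub (Set.Ico_subset_Icc_self hx))).hasDerivWithinAt)
      (sub_eq_zero.2 hinit) fun x hx => ?_)
    have hxI := hsub (Set.Ico_subset_Icc_self hx)
    exact hX _ (hγ₁U x hxI) _ (hγ₂U x hxI)
  · have hsub : ∀ x ∈ Set.Icc (-t₀) (-t), -x ∈ I := fun x hx =>
      hI.out ht ht₀ ⟨le_neg_of_le_neg hx.2, neg_le_of_neg_le hx.1⟩
    have hder' : ∀ x ∈ Set.Icc (-t₀) (-t), HasDerivAt (fun x => γ₁ (-x) - γ₂ (-x))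
        (-(X (γ₁ (-x)) - X (γ₂ (-x)))) x := fun x hx => by
      simpa [Function.comp_def] using (hder (-x) (hsub x hx)).scomp x (hasDerivAt_neg x)
    have hzero := eq_zero_of_norm_deriv_right_le_mul_log
      (f := fun x => γ₁ (-x) - γ₂ (-x)) (f' := fun x => -(X (γ₁ (-x)) - X (γ₂ (-x))))
      hC (neg_le_neg h)
      (fun x hx => (hder' x hx).continuousAt.continuousWithinAt)
      (fun x hx => (hder' x (Set.Ico_subset_Icc_self hx)).hasDerivWithinAt)
      (by simpa [sub_eq_zero] using hinit) fun x hx => ?_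
    · simpa [sub_eq_zero] using hzero
    · have hxI := hsub x (Set.Ico_subset_Icc_self hx)
      rw [norm_neg]
      exact hX _ (hγ₁U _ hxI) _ (hγ₂U _ hxI)
end

section
/- Let J ⊆ ℝ be an open interval, h : J → ℝ differentiable and everywhere positive, I ⊆ ℝ an interval, and v : I → ℝ a twice differentiable function with values in J. If v satisfies the geodesic equation 2·v''(u) = (1 + v'(u)²)·h'(v(u))/h(v(u)) for all u ∈ I, then the function u ↦ log(1 + v'(u)²) − log(h(v(u))) is constant on I. -/
/-- First integral of the geodesic equation for the conformal metric
`ds² = h(v)(du² + dv²)`: if `2 v'' = (1 + v'²) h'(v)/h(v)` on an interval `I`,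
then `log(1 + v'²) − log(h(v))` is constant on `I`. -/
theorem geodesic_first_integral
    (J : Set ℝ) (hJ_open : IsOpen J) (hJ_conn : J.OrdConnected)
    (h h' : ℝ → ℝ)
    (hh : ∀ x ∈ J, HasDerivAt h (h' x) x)
    (hh_pos : ∀ x ∈ J, 0 < h x)
    (I : Set ℝ) (hI : I.OrdConnected)
    (v v' v'' : ℝ → ℝ)
    (hv : ∀ u ∈ I, HasDerivAt v (v' u) u)
    (hv' : ∀ u ∈ I, HasDerivAt v' (v'' u) u)
    (hvJ : ∀ u ∈ I, v u ∈ J)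
    (hgeo : ∀ u ∈ I, 2 * v'' u = (1 + (v' u) ^ 2) * h' (v u) / h (v u)) :
    ∀ u₁ ∈ I, ∀ u₂ ∈ I,
      Real.log (1 + (v' u₁) ^ 2) - Real.log (h (v u₁)) =
        Real.log (1 + (v' u₂) ^ 2) - Real.log (h (v u₂)) := by
  have hderiv : ∀ u ∈ I, HasDerivWithinAt
      (fun u => Real.log (1 + (v' u) ^ 2) - Real.log (h (v u))) 0 I u := by
    intro u hu
    have hpos : 0 < h (v u) := hh_pos _ (hvJ u hu)
    have hspeed : 0 < 1 + (v' u) ^ 2 := by positivity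
    have hlog_speed := (((hv' u hu).pow 2).const_add 1).log hspeed.ne'
    have hlog_h := ((hh _ (hvJ u hu)).comp u (hv u hu)).log hpos.ne'
    refine HasDerivAt.hasDerivWithinAt ((hlog_speed.sub hlog_h).congr_deriv ?_)
    have hgeo_u := hgeo u hu
    rw [eq_div_iff hpos.ne'] at hgeo_u
    simp only [Function.comp_apply, Pi.pow_apply]
    rw [sub_eq_zero, div_eq_div_iff hspeed.ne' hpos.ne']
    push_cast
    linear_combination v' u * hgeo_u
  intro u₁ hu₁ u₂ hu₂
  have hbound := hI.convex.norm_image_sub_le_of_norm_hasDerivWithin_le (C := 0) hderiv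
    (fun _ _ => norm_zero.le) hu₂ hu₁
  rw [zero_mul, norm_le_zero_iff] at hbound
  exact sub_eq_zero.mp hbound
end

section
/- Fix an integer k ≥ 1 and define h : ℝ → ℝ by h(x) = 1 + (2k+1)²·|x|^{4k/(2k+1)} (real power of |x|). Then h is differentiable on ℝ and positive, and both functions v₁(u) = 0 and v₂(u) = u^{2k+1} are twice differentiable on ℝ and satisfy the geodesic equation 2·v''(u) = (1 + v'(u)²)·h'(v(u))/h(v(u)) for all u ∈ ℝ. Moreover v₁(0) = v₂(0) = 0 and v₁'(0) = v₂'(0) = 0, while v₁ ≠ v₂; in particular solutions of this second-order equation with given initial position and velocity are not unique. -/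
/-- The derivative of `x ↦ 1 + c |x| ^ p` for `p > 1`. -/
theorem hasDerivAt_one_add_mul_abs_rpow (c : ℝ) {p : ℝ} (hp : 1 < p) (x : ℝ) :
    HasDerivAt (fun y : ℝ => 1 + c * |y| ^ p) (c * (p * |x| ^ (p - 2) * x)) x :=
  ((hasDerivAt_abs_rpow x hp).const_mul c).const_add 1

/-- Taking the real power `a / n` of `|u ^ n|` gives `|u| ^ a`. -/
theorem abs_pow_rpow_div (u a : ℝ) {n : ℕ} (hn : n ≠ 0) :
    |u ^ n| ^ (a / n) = |u| ^ a := by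
  have hn' : (n : ℝ) ≠ 0 := Nat.cast_ne_zero.mpr hn
  rw [abs_pow, ← Real.rpow_natCast, ← Real.rpow_mul (abs_nonneg u), mul_div_cancel₀ _ hn']

theorem deriv_pow_succ_fun (n : ℕ) :
    deriv (fun u : ℝ => u ^ (n + 1)) = fun u => ((n : ℝ) + 1) * u ^ n := by
  ext u
  simp

/-- Branching geodesics, first family of examples: for
`h(x) = 1 + (2k+1)²|x|^{4k/(2k+1)}`, the functions `v₁ ≡ 0` and
`v₂(u) = u^{2k+1}` are two distinct twice differentiable solutions of the
geodesic equation `2 v'' = (1 + v'²) h'(v)/h(v)` with the same initial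
position and velocity at `u = 0`. -/
theorem branching_geodesics_power (k : ℕ) (hk : 1 ≤ k) :
    let h : ℝ → ℝ := fun x => 1 + (2 * (k : ℝ) + 1) ^ 2 *
      |x| ^ ((4 * (k : ℝ)) / (2 * (k : ℝ) + 1))
    let v₁ : ℝ → ℝ := fun _ => 0
    let v₂ : ℝ → ℝ := fun u => u ^ (2 * k + 1)
    Differentiable ℝ h ∧ (∀ x : ℝ, 0 < h x) ∧
    Differentiable ℝ v₁ ∧ Differentiable ℝ (deriv v₁) ∧
    Differentiable ℝ v₂ ∧ Differentiable ℝ (deriv v₂) ∧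
    (∀ u : ℝ, 2 * deriv (deriv v₁) u =
      (1 + (deriv v₁ u) ^ 2) * deriv h (v₁ u) / h (v₁ u)) ∧
    (∀ u : ℝ, 2 * deriv (deriv v₂) u =
      (1 + (deriv v₂ u) ^ 2) * deriv h (v₂ u) / h (v₂ u)) ∧
    v₁ 0 = 0 ∧ v₂ 0 = 0 ∧ deriv v₁ 0 = 0 ∧ deriv v₂ 0 = 0 ∧ v₁ ≠ v₂ := by
  intro h v₁ v₂
  have hk' : (1 : ℝ) ≤ k := Nat.one_le_cast.mpr hk
  have hn : (0 : ℝ) < 2 * (k : ℝ) + 1 := by positivity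
  have hp : 1 < (4 * (k : ℝ)) / (2 * (k : ℝ) + 1) := by
    rw [lt_div_iff₀ hn]
    linarith
  have hderiv (x : ℝ) := hasDerivAt_one_add_mul_abs_rpow ((2 * (k : ℝ) + 1) ^ 2) hp x
  have hpos (x : ℝ) : 0 < h x := by positivity
  have hv₁ : deriv v₁ = fun _ => 0 := deriv_const' 0
  have hv₂ : deriv v₂ = fun u => (2 * (k : ℝ) + 1) * u ^ (2 * k) := by
    simpa using deriv_pow_succ_fun (2 * k)
  refine ⟨fun x => (hderiv x).differentiableAt, hpos, differentiable_const 0, ?_,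
    differentiable_pow _, ?_, fun u => ?_, fun u => ?_, rfl, ?_, ?_, ?_, fun heq => ?_⟩
  · rw [hv₁]
    exact differentiable_const 0
  · rw [hv₂]
    fun_prop
  · have hh : deriv h 0 = 0 := by
      rw [(hderiv 0).deriv, mul_zero, mul_zero]
    simp [hv₁, v₁, hh]
  · have hcast : 2 * (k : ℝ) + 1 = ((2 * k + 1 : ℕ) : ℝ) := by push_cast; rfl
    have hspeed : h (v₂ u) = 1 + deriv v₂ u ^ 2 := by
      have hpow : |v₂ u| ^ (4 * (k : ℝ) / (2 * (k : ℝ) + 1)) = (u ^ (2 * k)) ^ 2 := by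
        rw [hcast, abs_pow_rpow_div u _ (by positivity), ← pow_mul,
          ← (show Even (2 * k * 2) from even_two.mul_left _).pow_abs, ← Real.rpow_natCast]
        congr 1
        push_cast
        ring
      simp only [h, hpow, hv₂]
      ring
    have hslope : deriv h (v₂ u) = 2 * deriv (deriv v₂) u := by
      rw [(hderiv (v₂ u)).deriv, hv₂]
      obtain ⟨m, rfl⟩ := Nat.exists_eq_add_of_le' hk
      have hexp : (4 * ((m + 1 : ℕ) : ℝ)) / (2 * ((m + 1 : ℕ) : ℝ) + 1) - 2 =
          -2 / ((2 * (m + 1) + 1 : ℕ) : ℝ) := by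
        push_cast
        field_simp
        ring
      rw [hexp, abs_pow_rpow_div u _ (by positivity),
        show 2 * (m + 1) = (2 * m + 1) + 1 by ring, deriv_const_mul_field, deriv_pow_succ_fun]
      rcases eq_or_ne u 0 with rfl | hu
      · simp [v₂]
      · rw [Real.rpow_neg (abs_nonneg u), Real.rpow_two, sq_abs]
        simp only [v₂]
        push_cast
        field_simp
        ring
    rw [← hspeed, hslope, mul_div_cancel_left₀ _ (hpos _).ne']
  · simp [v₂]
  · rw [hv₁]
  · simp [hv₂, Nat.one_le_iff_ne_zero.mp hk]
  · simpa [v₁, v₂] using congrFun heq 1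
end

section
/- Fix an integer k ≥ 1. Define h : (−1,1) → ℝ by h(0) = 1 and h(x) = 1 + k²·(log(1/|x|))^{2+2/k}·x² for 0 < |x| < 1, and define v₂ : (−1,1) → ℝ by v₂(0) = 0 and v₂(u) = sgn(u)·exp(−1/|u|^k) for u ≠ 0. Then h is differentiable and positive on (−1,1), v₂ takes values in (−1,1), both v₁(u) = 0 and v₂ are twice differentiable on (−1,1) and satisfy the geodesic equation 2·v''(u) = (1 + v'(u)²)·h'(v(u))/h(v(u)) for all u ∈ (−1,1), and v₁(0) = v₂(0) = 0, v₁'(0) = v₂'(0) = 0 while v₁ ≠ v₂. -/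
open Filter Topology Asymptotics

/-- A function vanishing to second order at the origin has derivative zero there. -/
theorem hasDerivAt_zero_of_abs_le_sq {f : ℝ → ℝ} {C : ℝ} (h0 : f 0 = 0)
    (hf : ∀ u, |u| ≤ 1 → |f u| ≤ C * u ^ 2) : HasDerivAt f 0 0 := by
  have hO : f =O[𝓝 0] fun u : ℝ => u ^ 2 := by
    refine IsBigO.of_bound C ?_
    filter_upwards [Metric.closedBall_mem_nhds (0 : ℝ) one_pos] with u hu
    simpa using hf u (by simpa using hu)
  rw [hasDerivAt_iff_isLittleO]
  simpa [h0] using hO.trans_isLittleO (isLittleO_pow_id one_lt_two)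

/-- The flat exponential `exp (-1/t^k)` is bounded by a multiple of `t ^ (4 * k)`. -/
theorem exp_neg_one_div_pow_le (k : ℕ) {t : ℝ} (ht : 0 < t) :
    Real.exp (-(1 / t ^ k)) ≤ 24 * (t ^ k) ^ 4 := by
  have hs : 0 < t ^ k := pow_pos ht k
  have h := Real.pow_div_factorial_le_exp (1 / t ^ k) (by positivity) 4
  rw [Real.exp_neg, inv_le_comm₀ (Real.exp_pos _) (by positivity)]
  refine le_trans (le_of_eq ?_) h
  norm_num [Nat.factorial]
  ring

theorem hasDerivAt_exp_neg_one_div_pow (k : ℕ) {t : ℝ} (ht : t ≠ 0) :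
    HasDerivAt (fun s : ℝ => Real.exp (-(1 / s ^ k)))
      (k / t ^ (k + 1) * Real.exp (-(1 / t ^ k))) t := by
  have h := ((hasDerivAt_pow k t).fun_inv (pow_ne_zero k ht)).fun_neg.exp
  simp only [one_div]
  convert h using 1
  rcases k with _ | k
  · simp
  · field_simp
    simp only [Nat.add_sub_cancel]
    ring

/-- Away from the origin, the odd extension of `exp (-1/u^k)` is differentiable. -/
theorem hasDerivAt_sign_mul_exp (k : ℕ) {u : ℝ} (hu : u ≠ 0) :
    HasDerivAt (fun x : ℝ => Real.sign x * Real.exp (-(1 / |x| ^ k)))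
      (k / |u| ^ (k + 1) * Real.exp (-(1 / |u| ^ k))) u := by
  have h := (hasDerivAt_exp_neg_one_div_pow k (abs_ne_zero.2 hu)).comp u (hasDerivAt_abs hu)
  have hs : Real.sign =ᶠ[𝓝 u] fun _ => Real.sign u := by
    rcases lt_or_gt_of_ne hu with h | h
    · filter_upwards [Iio_mem_nhds h] with x hx
      rw [Real.sign_of_neg h, Real.sign_of_neg hx]
    · filter_upwards [Ioi_mem_nhds h] with x hx
      rw [Real.sign_of_pos h, Real.sign_of_pos hx]
  refine ((h.const_mul (Real.sign u)).congr_of_eventuallyEq ?_).congr_deriv ?_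
  · filter_upwards [hs] with x hx
    simp [hx]
  · rcases lt_or_gt_of_ne hu with h | h
    · simp [h, Real.sign_of_neg h]
    · simp [h, Real.sign_of_pos h]

theorem hasDerivAt_sign_mul_exp_zero {k : ℕ} (hk : 1 ≤ k) :
    HasDerivAt (fun x : ℝ => Real.sign x * Real.exp (-(1 / |x| ^ k))) 0 0 := by
  refine hasDerivAt_zero_of_abs_le_sq (C := 24) (by simp) fun u hu => ?_
  rcases eq_or_ne u 0 with rfl | h0
  · simp
  have h := exp_neg_one_div_pow_le k (abs_pos.2 h0)
  have hsign : |Real.sign u| ≤ 1 := by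
    rcases Real.sign_apply_eq u with h | h | h <;> simp [h]
  calc |Real.sign u * Real.exp (-(1 / |u| ^ k))|
      ≤ 1 * Real.exp (-(1 / |u| ^ k)) := by
        rw [abs_mul, Real.abs_exp]; gcongr
    _ ≤ 24 * |u| ^ (k * 4) := by rw [one_mul, pow_mul]; exact h
    _ ≤ 24 * |u| ^ 2 := by
        gcongr 24 * ?_
        exact pow_le_pow_of_le_one (abs_nonneg u) hu (by omega)
    _ = 24 * u ^ 2 := by rw [sq_abs]

theorem hasDerivAt_div_mul_exp_zero {k : ℕ} (hk : 1 ≤ k) :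
    HasDerivAt (fun x : ℝ => k / |x| ^ (k + 1) * Real.exp (-(1 / |x| ^ k))) 0 0 := by
  refine hasDerivAt_zero_of_abs_le_sq (C := k * 24) (by simp) fun u hu => ?_
  rcases eq_or_ne u 0 with rfl | h0
  · simp
  have hpos := abs_pos.2 h0
  have h := exp_neg_one_div_pow_le k hpos
  rw [abs_of_nonneg (by positivity)]
  calc k / |u| ^ (k + 1) * Real.exp (-(1 / |u| ^ k))
      ≤ k / |u| ^ (k + 1) * (24 * (|u| ^ k) ^ 4) := by gcongr
    _ = k * 24 * |u| ^ (3 * k - 1) := by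
        have : (|u| ^ k) ^ 4 = |u| ^ (3 * k - 1) * |u| ^ (k + 1) := by
          rw [← pow_mul, ← pow_add]; congr 1; omega
        rw [this]; field_simp
    _ ≤ k * 24 * |u| ^ 2 := by
        gcongr _ * ?_
        exact pow_le_pow_of_le_one (abs_nonneg u) hu (by omega)
    _ = k * 24 * u ^ 2 := by rw [sq_abs]

theorem differentiableAt_div_mul_exp (k : ℕ) {u : ℝ} (hu : u ≠ 0) :
    DifferentiableAt ℝ (fun x : ℝ => k / |x| ^ (k + 1) * Real.exp (-(1 / |x| ^ k))) u := by
  have ha : DifferentiableAt ℝ (fun x : ℝ => |x|) u := (hasDerivAt_abs hu).differentiableAt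
  have h0 := abs_ne_zero.2 hu
  exact ((differentiableAt_const _).fun_div (ha.fun_pow _) (pow_ne_zero _ h0)).fun_mul
    ((hasDerivAt_exp_neg_one_div_pow k h0).differentiableAt.comp u ha)

theorem hasDerivAt_one_add_log_rpow_mul_sq_zero (c p : ℝ) :
    HasDerivAt (fun x : ℝ => 1 + c * Real.log (1 / |x|) ^ p * x ^ 2) 0 0 := by
  have h : (fun x : ℝ => Real.log (1 / |x|) ^ p * x ^ 2) =o[𝓝 0] fun x : ℝ => x := by
    rw [← nhdsNE_sup_pure]
    refine IsLittleO.sup ?_ (isLittleO_pure.2 (by simp))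
    have hlog := (isLittleO_abs_log_rpow_rpow_nhdsGT_zero p neg_one_lt_zero).comp_tendsto
      tendsto_abs_nhdsNE_zero
    refine (hlog.mul_isBigO (isBigO_refl (fun x : ℝ => x ^ 2) _)).congr' ?_ ?_ |>.of_abs_right
    · filter_upwards [nhdsWithin_le_nhds (Metric.closedBall_mem_nhds (0 : ℝ) one_pos)] with x hx
      have hx1 : |x| ≤ 1 := by simpa using hx
      simp only [Function.comp_apply, one_div, Real.log_inv]
      rw [abs_of_nonpos (Real.log_nonpos (abs_nonneg x) hx1)]
    · filter_upwards [self_mem_nhdsWithin] with x hx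
      have h0 : |x| ≠ 0 := abs_ne_zero.2 hx
      rw [Function.comp_apply, Real.rpow_neg_one, ← sq_abs x]
      field_simp
  rw [hasDerivAt_iff_isLittleO]
  simpa [mul_assoc] using h.const_mul_left c

theorem differentiableAt_one_add_log_rpow_mul_sq (c p : ℝ) {x : ℝ} (hx : x ≠ 0) (hx1 : |x| < 1) :
    DifferentiableAt ℝ (fun x : ℝ => 1 + c * Real.log (1 / |x|) ^ p * x ^ 2) x := by
  have ha : DifferentiableAt ℝ (fun x : ℝ => |x|) x := (hasDerivAt_abs hx).differentiableAt
  have h0 := abs_pos.2 hx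
  have hlog : Real.log (1 / |x|) ≠ 0 := (Real.log_pos ((one_lt_div h0).2 hx1)).ne'
  have h1 : DifferentiableAt ℝ (fun x : ℝ => Real.log (1 / |x|)) x :=
    ((differentiableAt_const _).fun_div ha h0.ne').log (by positivity)
  have h2 := h1.rpow_const (p := p) (Or.inl hlog)
  fun_prop

theorem abs_sign_mul_exp (k : ℕ) {u : ℝ} (hu : u ≠ 0) :
    |Real.sign u * Real.exp (-(1 / |u| ^ k))| = Real.exp (-(1 / |u| ^ k)) := by
  rcases Real.sign_apply_eq_of_ne_zero u hu with h | h <;> simp [h]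

/-- Along the curve, the conformal factor equals `1 + v'²`. -/
theorem one_add_log_rpow_mul_sq_sign_mul_exp {k : ℕ} (hk : 1 ≤ k) (u : ℝ) :
    1 + (k : ℝ) ^ 2 * Real.log (1 / |Real.sign u * Real.exp (-(1 / |u| ^ k))|) ^
        ((2 : ℝ) + 2 / (k : ℝ)) * (Real.sign u * Real.exp (-(1 / |u| ^ k))) ^ 2 =
      1 + (k / |u| ^ (k + 1) * Real.exp (-(1 / |u| ^ k))) ^ 2 := by
  rcases eq_or_ne u 0 with rfl | h0
  · simp
  have hpos := abs_pos.2 h0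
  have hk0 : (k : ℝ) ≠ 0 := by positivity
  have hrpow : (1 / |u| ^ k) ^ ((2 : ℝ) + 2 / (k : ℝ)) = 1 / (|u| ^ (k + 1)) ^ 2 := by
    rw [Real.div_rpow zero_le_one (by positivity), Real.one_rpow, ← Real.rpow_natCast,
      ← Real.rpow_mul hpos.le, ← pow_mul, ← Real.rpow_natCast]
    congr 2
    push_cast
    field_simp
  rw [← sq_abs (Real.sign u * _), abs_sign_mul_exp k h0, one_div (Real.exp _), Real.log_inv,
    Real.log_exp, neg_neg, hrpow]
  ring

/-- Branching geodesics, second family of examples: for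
`h(x) = 1 + k²(log(1/|x|))^{2+2/k} x²` on `(-1,1)` (with `h(0) = 1`), the
functions `v₁ ≡ 0` and `v₂(u) = sgn(u)·exp(−1/|u|^k)` are two distinct twice
differentiable solutions on `(-1,1)` of the geodesic equation
`2 v'' = (1 + v'²) h'(v)/h(v)` with the same initial position and velocity
at `u = 0`. -/
theorem branching_geodesics_exp (k : ℕ) (hk : 1 ≤ k) :
    let h : ℝ → ℝ := fun x =>
      1 + (k : ℝ) ^ 2 * (Real.log (1 / |x|)) ^ ((2 : ℝ) + 2 / (k : ℝ)) * x ^ 2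
    let v₁ : ℝ → ℝ := fun _ => 0
    let v₂ : ℝ → ℝ := fun u => Real.sign u * Real.exp (-(1 / |u| ^ k))
    h 0 = 1 ∧ v₂ 0 = 0 ∧
    (∀ x ∈ Set.Ioo (-1 : ℝ) 1, DifferentiableAt ℝ h x ∧ 0 < h x) ∧
    (∀ u ∈ Set.Ioo (-1 : ℝ) 1, v₂ u ∈ Set.Ioo (-1 : ℝ) 1) ∧
    (∀ u ∈ Set.Ioo (-1 : ℝ) 1,
      DifferentiableAt ℝ v₁ u ∧ DifferentiableAt ℝ (deriv v₁) u ∧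
      DifferentiableAt ℝ v₂ u ∧ DifferentiableAt ℝ (deriv v₂) u) ∧
    (∀ u ∈ Set.Ioo (-1 : ℝ) 1,
      2 * deriv (deriv v₁) u = (1 + (deriv v₁ u) ^ 2) * deriv h (v₁ u) / h (v₁ u) ∧
      2 * deriv (deriv v₂) u = (1 + (deriv v₂ u) ^ 2) * deriv h (v₂ u) / h (v₂ u)) ∧
    v₁ 0 = 0 ∧ deriv v₁ 0 = 0 ∧ deriv v₂ 0 = 0 ∧
    (∃ u ∈ Set.Ioo (-1 : ℝ) 1, v₁ u ≠ v₂ u) := by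
  intro h v₁ v₂
  set w : ℝ → ℝ := fun u => k / |u| ^ (k + 1) * Real.exp (-(1 / |u| ^ k)) with hw
  have hw0 : w 0 = 0 := by simp [hw]
  have hv0 : v₂ 0 = 0 := by simp [v₂]
  have hh0 : HasDerivAt h 0 0 := hasDerivAt_one_add_log_rpow_mul_sq_zero _ _
  have hv : ∀ u, HasDerivAt v₂ (w u) u := fun u => by
    rcases eq_or_ne u 0 with rfl | h0
    · rw [hw0]; exact hasDerivAt_sign_mul_exp_zero hk
    · exact hasDerivAt_sign_mul_exp k h0
  have hdv : deriv v₂ = w := funext fun u => (hv u).deriv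
  have hw' : HasDerivAt w 0 0 := hasDerivAt_div_mul_exp_zero hk
  have hwd : ∀ u, DifferentiableAt ℝ w u := fun u => by
    rcases eq_or_ne u 0 with rfl | h0
    · exact hw'.differentiableAt
    · exact differentiableAt_div_mul_exp k h0
  have hhv : ∀ u, h (v₂ u) = 1 + w u ^ 2 := one_add_log_rpow_mul_sq_sign_mul_exp hk
  have hhd : ∀ x, |x| < 1 → DifferentiableAt ℝ h x := fun x hx => by
    rcases eq_or_ne x 0 with rfl | h0
    · exact hh0.differentiableAt
    · exact differentiableAt_one_add_log_rpow_mul_sq _ _ h0 hx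
  have hv1 : ∀ u, |v₂ u| < 1 := fun u => by
    rcases eq_or_ne u 0 with rfl | h0
    · simp [hv0]
    · have := abs_pos.2 h0
      rw [abs_sign_mul_exp k h0, Real.exp_lt_one_iff, neg_lt_zero]
      positivity
  have hpos : ∀ x, |x| < 1 → 0 < h x := fun x hx => by
    rcases eq_or_ne x 0 with rfl | h0
    · simp [h]
    · have := Real.log_pos ((one_lt_div (abs_pos.2 h0)).2 hx)
      positivity
  have hgeo : ∀ u, 2 * deriv w u = deriv h (v₂ u) := fun u => by
    rcases eq_or_ne u 0 with rfl | h0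
    · rw [hv0, hw'.deriv, hh0.deriv, mul_zero]
    · have hne : w u ≠ 0 := by
        have := abs_pos.2 h0
        positivity
      have h1 := ((hhd _ (hv1 u)).hasDerivAt.comp u (hv u)).deriv
      have h2 := (((hwd u).hasDerivAt.fun_pow 2).const_add 1).deriv
      rw [show h ∘ v₂ = fun u => 1 + w u ^ 2 from funext hhv, h2] at h1
      refine mul_right_cancel₀ hne (Eq.trans ?_ h1)
      ring
  have hdv1 : deriv v₁ = fun _ => 0 := funext fun u => deriv_const u 0
  refine ⟨by simp [h], hv0, fun x hx => ?_, fun u _ => abs_lt.1 (hv1 u), fun u _ => ?_,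
    fun u _ => ⟨?_, ?_⟩, rfl, by simp [hdv1], by rw [hdv, hw0], 1 / 2, by norm_num, ?_⟩
  · exact ⟨hhd x (abs_lt.2 hx), hpos x (abs_lt.2 hx)⟩
  · rw [hdv, hdv1]
    exact ⟨differentiableAt_const _, differentiableAt_const _, (hv u).differentiableAt, hwd u⟩
  · simp [hdv1, v₁, hh0.deriv]
  · rw [hdv, ← hhv, hgeo, mul_div_cancel_left₀ _ (hpos _ (hv1 u)).ne']
  · simpa [v₁, v₂, Real.sign_of_pos] using (Real.exp_ne_zero _).symm
end

section
/- Let a > 0, ε > 0, T > 0, and let f : [0, T] → ℝ be differentiable with f'(τ) ≤ −f(τ)²/a + ε for all τ ∈ [0, T] and f(0) ≤ ε. Then f(τ) ≤ max(√(a·ε), ε) for all τ ∈ [0, T]. -/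
/-- Riccati comparison estimate: if `f' ≤ −f²/a + ε` on `[0,T]` and
`f(0) ≤ ε`, then `f ≤ max(√(aε), ε)` on `[0,T]`. -/
theorem riccati_comparison (a ε T : ℝ) (ha : 0 < a) (hε : 0 < ε) (hT : 0 < T)
    (f f' : ℝ → ℝ)
    (hf : ∀ τ ∈ Set.Icc (0 : ℝ) T, HasDerivWithinAt f (f' τ) (Set.Icc 0 T) τ)
    (hf' : ∀ τ ∈ Set.Icc (0 : ℝ) T, f' τ ≤ -(f τ) ^ 2 / a + ε)
    (hf0 : f 0 ≤ ε) :
    ∀ τ ∈ Set.Icc (0 : ℝ) T, f τ ≤ max (Real.sqrt (a * ε)) ε := by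
  intro τ hτ
  refine le_of_forall_pos_le_add fun δ hδ => ?_
  refine image_le_of_deriv_right_lt_deriv_boundary (f' := f')
    (B := fun _ => max (Real.sqrt (a * ε)) ε + δ) (B' := fun _ => 0)
    (fun x hx => (hf x hx).continuousWithinAt)
    (fun x hx => (hf x (Set.Ico_subset_Icc_self hx)).mono_of_mem_nhdsWithin
      (Icc_mem_nhdsGE_of_mem hx))
    ?_ (fun x => hasDerivAt_const x _) ?_ hτ
  · linarith [le_max_right (Real.sqrt (a * ε)) ε]
  · intro x hx hfx
    have hsqrt : Real.sqrt (a * ε) < f x := by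
      linarith [le_max_left (Real.sqrt (a * ε)) ε]
    have hsq : a * ε < f x ^ 2 :=
      (Real.sqrt_lt' ((Real.sqrt_nonneg _).trans_lt hsqrt)).1 hsqrt
    have hdiv : ε < f x ^ 2 / a := by
      rwa [lt_div_iff₀ ha, mul_comm]
    have hderiv := hf' x (Set.Ico_subset_Icc_self hx)
    rw [neg_div] at hderiv
    linarith
end
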